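/- Let M be a magma satisfying the generalized entropic property, i.e., there exist binary terms t, s such that (x*y)*(u*v) = t(x,u)*s(y,v) for all x,y,u,v in M. Then for any two nonempty subsets A, B of M that are closed under multiplication, the complex product A*B = {a*b : a ∈ A, b ∈ B} is closed under multiplication (i.e., the product of two submagmas of M is a submagma of M). -/

import Mathlib

open scoped Pointwise

/-- Evaluation of a binary term (an element of the free magma on two
generators) in a magma `M` under the assignment `0 ↦ a`, `1 ↦ b`. -/
def evalBin {M : Type*} [Mul M] (t : FreeMagma (Fin 2)) (a b : M) : M :=
  FreeMagma.lift ![a, b] t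

section

variable {M σ : Type*} [Mul M] [SetLike σ M] [MulMemClass σ M] {S : σ}

theorem freeMagma_lift_mem {α : Type*} {f : α → M} (hf : ∀ i, f i ∈ S) (t : FreeMagma α) :
    FreeMagma.lift f t ∈ S := by
  induction t using FreeMagma.recOnMul with
  | ih1 i => exact hf i
  | ih2 x y hx hy => simpa only [map_mul] using mul_mem hx hy

theorem evalBin_mem {a b : M} (ha : a ∈ S) (hb : b ∈ S) (t : FreeMagma (Fin 2)) :
    evalBin t a b ∈ S :=
  freeMagma_lift_mem (Fin.forall_fin_two.mpr ⟨ha, hb⟩) t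

/- As `M` is only assumed to be a magma, `Subsemigroup M` is the type of its submagmas. -/
theorem stmt_0_general
    (hGEP : ∀ x y u v : M, ∃ t s : FreeMagma (Fin 2),
      (x * y) * (u * v) = evalBin t x u * evalBin s y v)
    (A B : Subsemigroup M) {p q : M} (hp : p ∈ (A : Set M) * (B : Set M))
    (hq : q ∈ (A : Set M) * (B : Set M)) : p * q ∈ (A : Set M) * (B : Set M) := by
  obtain ⟨a, ha, b, hb, rfl⟩ := hp
  obtain ⟨c, hc, d, hd, rfl⟩ := hq
  obtain ⟨t, s, hts⟩ := hGEP a b c d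
  exact hts ▸ Set.mul_mem_mul (evalBin_mem ha hc t) (evalBin_mem hb hd s)

end

/-- If a magma `M` satisfies the generalized entropic property, then the
complex product of two nonempty multiplicatively closed subsets is
multiplicatively closed. -/
theorem stmt_0 {M : Type*} [Mul M]
    (hGEP : ∃ t s : FreeMagma (Fin 2),
      ∀ x y u v : M, (x * y) * (u * v) = evalBin t x u * evalBin s y v)
    (A B : Set M) (hA : A.Nonempty) (hB : B.Nonempty)
    (hAc : ∀ a b : M, a ∈ A → b ∈ A → a * b ∈ A)
    (hBc : ∀ a b : M, a ∈ B → b ∈ B → a * b ∈ B) :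
    ∀ p q : M, p ∈ A * B → q ∈ A * B → p * q ∈ A * B := by
  obtain ⟨t, s, hts⟩ := hGEP
  exact fun _ _ ↦ stmt_0_general (fun x y u v ↦ ⟨t, s, hts x y u v⟩) ⟨A, hAc _ _⟩ ⟨B, hBc _ _⟩
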